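/- Let M > M₁(Ω₁), let (ε_m) ⊂ (0, ε₀) with ε_m → 0, and for each m let u^{ε_m} ∈ C²(Ω̄^{ε_m}) be the strictly k-convex solution of problem (2.1) with inner ball B_{ε_m}(0), satisfying u^{ε_m} ≥ u̲^{ε_m} in Ω^{ε_m}; let ũ^{ε_m} be its extension by −M on B̄_{ε_m}(0). Suppose the sequence (ũ^{ε_m}) is nondecreasing in m and converges, in C¹ on compact subsets of Ω₁ \ {0}, to a function v : Ω₁ \ {0} → ℝ, and extend v to 0 by v(0) = limsup_{x→0} v(x). Then v is k-convex in the viscosity sense in Ω₁: for every quadratic polynomial q on ℝⁿ such that v − q attains a finite local maximum at some point of Ω₁, one has σ_k(D²q) ≥ 0. -/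

import Mathlib

open Set Metric Filter Topology Bornology
open scoped RealInnerProductSpace

noncomputable section

/-- Euclidean `n`-space. -/
abbrev Euc (n : ℕ) := EuclideanSpace ℝ (Fin n)

/-- The `k`-th elementary symmetric polynomial of a vector `lam ∈ ℝⁿ`. -/
def esymmVec {n : ℕ} (k : ℕ) (lam : Fin n → ℝ) : ℝ :=
  ∑ S ∈ Finset.powersetCard k (Finset.univ : Finset (Fin n)), ∏ i ∈ S, lam i

/-- `σ_k(A)`: the `k`-th elementary symmetric polynomial of the eigenvalues of a
symmetric matrix `A` (junk value `0` if `A` is not symmetric). -/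
noncomputable def sigmaMat {n : ℕ} (k : ℕ) (A : Matrix (Fin n) (Fin n) ℝ) : ℝ := by
  classical exact if h : A.IsHermitian then esymmVec k h.eigenvalues else 0

/-- The eigenvalues of the symmetric matrix `A` lie in the Gårding cone
`Γ_k = {λ : σ_j(λ) > 0, j = 1, …, k}`. -/
def InGardingCone {n : ℕ} (k : ℕ) (A : Matrix (Fin n) (Fin n) ℝ) : Prop :=
  ∃ h : A.IsHermitian, ∀ j : ℕ, 1 ≤ j → j ≤ k → 0 < esymmVec j h.eigenvalues

/-- The Hessian matrix of `u` at `x`, with derivatives taken within the set `s`. -/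
noncomputable def hessianWithin {n : ℕ} (u : Euc n → ℝ) (s : Set (Euc n)) (x : Euc n) :
    Matrix (Fin n) (Fin n) ℝ :=
  fun i j => iteratedFDerivWithin ℝ 2 u s x
    ![EuclideanSpace.single i (1:ℝ), EuclideanSpace.single j (1:ℝ)]

/-- The Hessian matrix `D²u(x)` of `u` at `x`. -/
noncomputable def hessian {n : ℕ} (u : Euc n → ℝ) (x : Euc n) : Matrix (Fin n) (Fin n) ℝ :=
  fun i j => iteratedFDeriv ℝ 2 u x
    ![EuclideanSpace.single i (1:ℝ), EuclideanSpace.single j (1:ℝ)]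

/-- Operator norm of the Hessian matrix of `u` at `x` (derivatives within `s`). -/
noncomputable def hessOpNormWithin {n : ℕ} (u : Euc n → ℝ) (s : Set (Euc n)) (x : Euc n) : ℝ :=
  ‖Matrix.toEuclideanCLM (𝕜 := ℝ) (hessianWithin u s x)‖

/-- A set has smooth boundary: it is the sublevel set of a smooth defining function
with nonvanishing differential on the boundary. -/
def HasSmoothBoundary {n : ℕ} (Ω : Set (Euc n)) : Prop :=
  ∃ ρ : Euc n → ℝ, ContDiff ℝ (⊤ : ℕ∞) ρ ∧ Ω = {x | ρ x < 0} ∧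
    ∀ x ∈ frontier Ω, fderiv ℝ ρ x ≠ 0

/-- `c_{n,k} = (C(n,k))^{1/k}` where `C(n,k)` is the binomial coefficient. -/
noncomputable def cnk (n k : ℕ) : ℝ := (n.choose k : ℝ) ^ ((1:ℝ)/(k:ℝ))

/-- The radially symmetric subsolution `|x - x₀|²/(2c_{n,k}) − ε²/(2c_{n,k}) − M`. -/
noncomputable def underSol {n : ℕ} (k : ℕ) (x₀ : Euc n) (ε M : ℝ) (x : Euc n) : ℝ :=
  ‖x - x₀‖^2 / (2 * cnk n k) - ε^2 / (2 * cnk n k) - M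

/-- The closed ring `Ω̄^ε = closure (Ω₁ \ B̄_ε(x₀))`. -/
def ringSet {n : ℕ} (Ω₁ : Set (Euc n)) (x₀ : Euc n) (ε : ℝ) : Set (Euc n) :=
  closure (Ω₁ \ closedBall x₀ ε)

/-- `u` is a strictly `k`-convex solution of problem (2.1):
`σ_k(D²u) = 1` in `Ω^ε = Ω₁ \ B̄_ε(x₀)`, `u = 0` on `∂Ω₁`, `u = −M` on `∂B_ε(x₀)`,
with `u ∈ C²(Ω̄^ε)`. -/
def IsSol {n : ℕ} (k : ℕ) (Ω₁ : Set (Euc n)) (x₀ : Euc n) (ε M : ℝ) (u : Euc n → ℝ) : Prop :=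
  ContDiffOn ℝ 2 u (ringSet Ω₁ x₀ ε) ∧
  (∀ x ∈ Ω₁ \ closedBall x₀ ε,
      InGardingCone k (hessianWithin u (ringSet Ω₁ x₀ ε) x) ∧
      sigmaMat k (hessianWithin u (ringSet Ω₁ x₀ ε) x) = 1) ∧
  (∀ x ∈ frontier Ω₁, u x = 0) ∧
  (∀ x ∈ sphere x₀ ε, u x = -M)

/-- `ψ` is a strictly `k`-convex solution of problem (2.2):
`σ_k(D²ψ) = 1` in `Ω₁`, `ψ = 0` on `∂Ω₁`, with `ψ ∈ C^∞(Ω̄₁)`. -/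
def IsSol22 {n : ℕ} (k : ℕ) (Ω₁ : Set (Euc n)) (ψ : Euc n → ℝ) : Prop :=
  ContDiffOn ℝ (⊤ : ℕ∞) ψ (closure Ω₁) ∧
  (∀ x ∈ Ω₁, InGardingCone k (hessianWithin ψ (closure Ω₁) x) ∧
      sigmaMat k (hessianWithin ψ (closure Ω₁) x) = 1) ∧
  (∀ x ∈ frontier Ω₁, ψ x = 0)

/-- `u` is a strictly `k`-convex solution of the Dirichlet problem on the convex ring
`Ω = Ω₁ \ Ω̄₂`: `σ_k(D²u) = 1` in `Ω`, `u = 0` on `∂Ω₁`, `u = −M` on `∂Ω₂`,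
with `u ∈ C²(Ω̄)`. -/
def IsSolRing {n : ℕ} (k : ℕ) (Ω₁ Ω₂ : Set (Euc n)) (M : ℝ) (u : Euc n → ℝ) : Prop :=
  ContDiffOn ℝ 2 u (closure (Ω₁ \ closure Ω₂)) ∧
  (∀ x ∈ Ω₁ \ closure Ω₂,
      InGardingCone k (hessianWithin u (closure (Ω₁ \ closure Ω₂)) x) ∧
      sigmaMat k (hessianWithin u (closure (Ω₁ \ closure Ω₂)) x) = 1) ∧
  (∀ x ∈ frontier Ω₁, u x = 0) ∧
  (∀ x ∈ frontier Ω₂, u x = -M)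

/-- The extension `ũ` of `u`, equal to `−M` on the closed ball `B̄_ε(x₀)`. -/
noncomputable def extendBy {n : ℕ} (u : Euc n → ℝ) (x₀ : Euc n) (ε M : ℝ) (x : Euc n) : ℝ := by
  classical exact if x ∈ closedBall x₀ ε then -M else u x

/-- The extension `ũ` of `u`, equal to `−M` on the set `Ω₂`. -/
noncomputable def extendOn {n : ℕ} (u : Euc n → ℝ) (Ω₂ : Set (Euc n)) (M : ℝ) (x : Euc n) : ℝ := by
  classical exact if x ∈ Ω₂ then -M else u x

/-- The quadratic polynomial with Hessian `A`, linear part `b` and constant term `c`. -/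
noncomputable def quadPoly {n : ℕ} (A : Matrix (Fin n) (Fin n) ℝ) (b : Euc n) (c : ℝ)
    (x : Euc n) : ℝ :=
  (∑ i, ∑ j, A i j * x i * x j) / 2 + ⟪b, x⟫ + c

/-!
Each `ũ^ε` is itself `k`-convex in the viscosity sense. Off the inner ball it is `C²` with Hessian
in the open cone `Γ_k`, and a quadratic polynomial touching it from above has a larger Hessian,
hence one in `Γ_k` as well: increasing a matrix increases its eigenvalues (Weyl), and increasing
one eigenvalue keeps the spectrum in `Γ_k` because the elementary symmetric functions of the
remaining eigenvalues are positive (Newton's inequalities). On the inner ball `ũ^ε = -M` is a local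
minimum, so the Hessian of the polynomial is positive semidefinite.

Viscosity `k`-convexity passes to the upper envelope `v`. If `v - q` has a local maximum at `x₀`,
subtracting `η |x - x₀|² / 2` makes it strict, and then some `ũ^ε - q - η |x - x₀|² / 2` has a local
maximum near `x₀`; this gives `σ_k(D²q + η I) ≥ 0`, and `η → 0`. The argument only needs
`ũ^ε ≤ v` on a dense set, by continuity of `ũ^ε`, and that values of the `ũ^ε` near `x₀` come
arbitrarily close to `v x₀`. At the puncture the second fact is what `v 0 = limsup v` says.
-/

section NewtonInequality

open Polynomial

theorem splits_derivative {p : ℝ[X]} (hp : p.Splits) : (derivative p).Splits := by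
  by_cases hdeg : p.natDegree = 0
  · rw [derivative_of_natDegree_zero hdeg]
    exact Splits.zero
  · rw [splits_iff_card_roots] at hp ⊢
    have hrolle := card_roots_le_derivative p
    have hle := natDegree_derivative_le p
    have hcard := card_roots' (derivative p)
    omega

theorem splits_iterate_derivative {p : ℝ[X]} (hp : p.Splits) (j : ℕ) :
    (derivative^[j] p).Splits :=
  Function.Iterate.rec (fun q : ℝ[X] => q.Splits) hp (fun _ hq => splits_derivative hq) j

theorem eval_mul_eval_derivative_derivative_le_sq {p : ℝ[X]} (hp : p.Splits) (x : ℝ) :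
    p.eval x * (derivative (derivative p)).eval x ≤ (derivative p).eval x ^ 2 := by
  induction hp using Submonoid.closure_induction with
  | mem q hq =>
    have hconst : derivative (derivative q) = 0 := by
      rcases hq with ⟨a, rfl⟩ | ⟨a, rfl⟩ <;> simp
    simpa [hconst] using sq_nonneg (eval x (derivative q))
  | one => simp
  | mul f g _ _ hf hg =>
    simp only [derivative_mul, derivative_add, eval_add, eval_mul]
    -- `(fg)'² - (fg)(fg)'' = g² (f'² - f f'') + f² (g'² - g g'')`
    nlinarith [mul_le_mul_of_nonneg_left hf (sq_nonneg (eval x g)),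
      mul_le_mul_of_nonneg_left hg (sq_nonneg (eval x f))]

theorem coeff_mul_coeff_add_two_le_sq {p : ℝ[X]} (hp : p.Splits) (j : ℕ) :
    p.coeff j * p.coeff (j + 2) ≤ p.coeff (j + 1) ^ 2 := by
  rcases le_or_gt (p.coeff j * p.coeff (j + 2)) 0 with hneg | hpos
  · exact hneg.trans (sq_nonneg _)
  have hlaguerre := eval_mul_eval_derivative_derivative_le_sq (splits_iterate_derivative hp j) 0
  simp only [← Function.iterate_succ_apply' derivative, ← coeff_zero_eq_eval_zero,
    coeff_iterate_derivative, zero_add, Nat.descFactorial_self, nsmul_eq_mul, Nat.succ_eq_add_one,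
    Nat.factorial_succ, Nat.cast_mul, Nat.cast_add, Nat.cast_one] at hlaguerre
  have hfact : (0 : ℝ) < (j.factorial : ℝ) ^ 2 * (j + 1) ^ 2 := by positivity
  refine le_of_mul_le_mul_left ?_ hfact
  calc (j.factorial : ℝ) ^ 2 * (j + 1) ^ 2 * (p.coeff j * p.coeff (j + 2))
      ≤ (j.factorial : ℝ) ^ 2 * ((j + 1) * (j + 2)) * (p.coeff j * p.coeff (j + 2)) := by
        gcongr
        nlinarith
    _ ≤ (j.factorial : ℝ) ^ 2 * (j + 1) ^ 2 * p.coeff (j + 1) ^ 2 := by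
        linarith

theorem esymm_mul_esymm_add_two_le_sq (s : Multiset ℝ) (j : ℕ) :
    s.esymm j * s.esymm (j + 2) ≤ s.esymm (j + 1) ^ 2 := by
  rcases lt_or_ge s.card (j + 2) with hlt | hle
  · have hzero : s.esymm (j + 2) = 0 := by
      simp [Multiset.esymm, Multiset.powersetCard_eq_empty _ hlt]
    simpa [hzero] using sq_nonneg (s.esymm (j + 1))
  obtain ⟨i, hi⟩ := Nat.exists_eq_add_of_le hle
  have hsplits : (s.map fun r => X + C r).prod.Splits :=
    Splits.multisetProd fun q hq => by
      obtain ⟨r, -, rfl⟩ := Multiset.mem_map.mp hq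
      exact Splits.X_add_C r
  have hnewton := coeff_mul_coeff_add_two_le_sq hsplits i
  rw [Multiset.prod_X_add_C_coeff s (by omega), Multiset.prod_X_add_C_coeff s (by omega),
    Multiset.prod_X_add_C_coeff s (by omega), show s.card - i = j + 2 by omega,
    show s.card - (i + 2) = j by omega, show s.card - (i + 1) = j + 1 by omega] at hnewton
  linarith

end NewtonInequality

section GardingCone

theorem esymm_zero {R : Type*} [CommSemiring R] (s : Multiset R) : s.esymm 0 = 1 := by
  simp [Multiset.esymm]

theorem esymm_cons_succ {R : Type*} [CommSemiring R] (a : R) (s : Multiset R) (j : ℕ) :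
    (a ::ₘ s).esymm (j + 1) = s.esymm (j + 1) + a * s.esymm j := by
  simp [Multiset.esymm, Multiset.powersetCard_cons, Multiset.sum_map_mul_left]

/-- The Gårding cone `Γ_k` for multisets of real numbers. Including `j = 0` is harmless, since
`σ_0 = 1`, and makes the inductions below start. -/
def GardingPos (k : ℕ) (s : Multiset ℝ) : Prop :=
  ∀ j ≤ k, 0 < s.esymm j

theorem GardingPos.esymm_pos_of_cons {k : ℕ} {a : ℝ} {s : Multiset ℝ}
    (h : GardingPos k (a ::ₘ s)) {j : ℕ} (hj : j < k) : 0 < s.esymm j := by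
  induction j with
  | zero => simp [esymm_zero]
  | succ j ih =>
    have hpos : 0 < s.esymm j := ih (by omega)
    have hnewton := esymm_mul_esymm_add_two_le_sq s j
    have hfst : 0 < s.esymm (j + 1) + a * s.esymm j :=
      esymm_cons_succ a s j ▸ h (j + 1) (by omega)
    have hsnd : 0 < s.esymm (j + 2) + a * s.esymm (j + 1) :=
      esymm_cons_succ a s (j + 1) ▸ h (j + 2) (by omega)
    by_contra! hneg
    -- If `σ_{j+1} ≤ 0`, then `σ_j (σ_{j+2} + a σ_{j+1}) ≤ σ_{j+1} (σ_{j+1} + a σ_j) ≤ 0`.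
    nlinarith [mul_pos hpos hsnd, mul_nonneg (neg_nonneg.2 hneg) hfst.le]

theorem GardingPos.cons_of_le {k : ℕ} {a b : ℝ} {s : Multiset ℝ} (h : GardingPos k (a ::ₘ s))
    (hab : a ≤ b) : GardingPos k (b ::ₘ s) := by
  rintro (_ | j) hj
  · simp [esymm_zero]
  · calc 0 < (a ::ₘ s).esymm (j + 1) := h _ hj
      _ = s.esymm (j + 1) + a * s.esymm j := esymm_cons_succ a s j
      _ ≤ s.esymm (j + 1) + b * s.esymm j := by gcongr; exact (h.esymm_pos_of_cons hj).le
      _ = (b ::ₘ s).esymm (j + 1) := (esymm_cons_succ b s j).symm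

theorem GardingPos.add_of_rel_le {k : ℕ} {s t : Multiset ℝ} (hst : Multiset.Rel (· ≤ ·) s t)
    {r : Multiset ℝ} (h : GardingPos k (s + r)) : GardingPos k (t + r) := by
  induction hst generalizing r with
  | zero => exact h
  | @cons a b s t hab _ ih =>
    rw [Multiset.cons_add, ← Multiset.add_cons] at h
    have htail := ih h
    rw [Multiset.add_cons] at htail
    rw [Multiset.cons_add]
    exact htail.cons_of_le hab

theorem GardingPos.map_of_le {ι : Type*} {k : ℕ} {s : Multiset ι} {l m : ι → ℝ} (hlm : l ≤ m)
    (h : GardingPos k (s.map l)) : GardingPos k (s.map m) := by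
  have hrel : Multiset.Rel (· ≤ ·) (s.map l) (s.map m) :=
    Multiset.rel_map.2 (Multiset.rel_refl_of_refl_on fun i _ => hlm i)
  simpa using GardingPos.add_of_rel_le hrel (r := 0) (by simpa using h)

theorem esymmVec_eq_esymm {n : ℕ} (k : ℕ) (l : Fin n → ℝ) :
    esymmVec k l = (Finset.univ.val.map l).esymm k :=
  (Finset.esymm_map_val l Finset.univ k).symm

theorem inGardingCone_iff {n k : ℕ} {A : Matrix (Fin n) (Fin n) ℝ} (hA : A.IsHermitian) :
    InGardingCone k A ↔ GardingPos k (Finset.univ.val.map hA.eigenvalues) := by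
  simp only [InGardingCone, esymmVec_eq_esymm, exists_prop_of_true hA]
  refine ⟨fun h j hj => ?_, fun h j _ hj => h j hj⟩
  rcases j.eq_zero_or_pos with rfl | hpos
  · simp [esymm_zero]
  · exact h j hpos hj

theorem sigmaMat_eq {n : ℕ} (k : ℕ) {A : Matrix (Fin n) (Fin n) ℝ} (hA : A.IsHermitian) :
    sigmaMat k A = esymmVec k hA.eigenvalues :=
  dif_pos hA

theorem InGardingCone.sigmaMat_pos {n k : ℕ} {A : Matrix (Fin n) (Fin n) ℝ}
    (h : InGardingCone k A) : 0 < sigmaMat k A := by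
  obtain ⟨hA, -⟩ := id h
  rw [sigmaMat_eq k hA, esymmVec_eq_esymm]
  exact (inGardingCone_iff hA).1 h k le_rfl

theorem sigmaMat_nonneg_of_posSemidef {n : ℕ} (k : ℕ) {A : Matrix (Fin n) (Fin n) ℝ}
    (hA : A.PosSemidef) : 0 ≤ sigmaMat k A := by
  rw [sigmaMat_eq k hA.1]
  exact Finset.sum_nonneg fun _ _ => Finset.prod_nonneg fun i _ => hA.eigenvalues_nonneg i

end GardingCone

section Weyl

variable {𝕜 E : Type*} [RCLike 𝕜] [NormedAddCommGroup E] [InnerProductSpace 𝕜 E]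
  [FiniteDimensional 𝕜 E] {n : ℕ} {T S : E →ₗ[𝕜] E}

theorem exists_ne_zero_forall_inner_eq_zero {ι : Type*} [Fintype ι] (e : ι → E)
    (hcard : Fintype.card ι < Module.finrank 𝕜 E) :
    ∃ w : E, w ≠ 0 ∧ ∀ i, inner 𝕜 (e i) w = 0 := by
  let L : E →ₗ[𝕜] ι → 𝕜 := LinearMap.pi fun i => (innerSL 𝕜 (e i)).toLinearMap
  have hker : LinearMap.ker L ≠ ⊥ :=
    LinearMap.ker_ne_bot_of_finrank_lt (by rwa [Module.finrank_fintype_fun_eq_card])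
  obtain ⟨w, hw, hw0⟩ := Submodule.exists_mem_ne_zero_of_ne_bot hker
  exact ⟨w, hw0, fun i => congrFun (LinearMap.mem_ker.1 hw) i⟩

theorem re_inner_apply_self_eq_sum_eigenvalues (hT : T.IsSymmetric)
    (hn : Module.finrank 𝕜 E = n) (w : E) :
    RCLike.re (inner 𝕜 (T w) w) =
      ∑ j, hT.eigenvalues hn j * ‖inner 𝕜 (hT.eigenvectorBasis hn j) w‖ ^ 2 := by
  rw [← (hT.eigenvectorBasis hn).sum_inner_mul_inner, map_sum]
  refine Finset.sum_congr rfl fun j _ => ?_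
  rw [hT w, hT.apply_eigenvectorBasis hn, inner_smul_right, mul_assoc, RCLike.re_ofReal_mul,
    ← inner_conj_symm, RCLike.conj_mul, ← RCLike.ofReal_pow, RCLike.ofReal_re]

theorem eigenvalues_mul_sq_norm_le_re_inner (hT : T.IsSymmetric) (hn : Module.finrank 𝕜 E = n)
    {i : Fin n} {w : E} (hw : ∀ j > i, inner 𝕜 (hT.eigenvectorBasis hn j) w = 0) :
    hT.eigenvalues hn i * ‖w‖ ^ 2 ≤ RCLike.re (inner 𝕜 (T w) w) := by
  rw [re_inner_apply_self_eq_sum_eigenvalues hT hn,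
    ← (hT.eigenvectorBasis hn).sum_sq_norm_inner_right w, Finset.mul_sum]
  refine Finset.sum_le_sum fun j _ => ?_
  rcases le_or_gt j i with hj | hj
  · exact mul_le_mul_of_nonneg_right (hT.eigenvalues_antitone hn hj) (sq_nonneg _)
  · simp [hw j hj]

theorem re_inner_le_eigenvalues_mul_sq_norm (hT : T.IsSymmetric) (hn : Module.finrank 𝕜 E = n)
    {i : Fin n} {w : E} (hw : ∀ j < i, inner 𝕜 (hT.eigenvectorBasis hn j) w = 0) :
    RCLike.re (inner 𝕜 (T w) w) ≤ hT.eigenvalues hn i * ‖w‖ ^ 2 := by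
  rw [re_inner_apply_self_eq_sum_eigenvalues hT hn,
    ← (hT.eigenvectorBasis hn).sum_sq_norm_inner_right w, Finset.mul_sum]
  refine Finset.sum_le_sum fun j _ => ?_
  rcases le_or_gt i j with hj | hj
  · exact mul_le_mul_of_nonneg_right (hT.eigenvalues_antitone hn hj) (sq_nonneg _)
  · simp [hw j hj]

theorem eigenvalues_le_eigenvalues_add (hT : T.IsSymmetric) (hS : S.IsSymmetric)
    (hn : Module.finrank 𝕜 E = n) {c : ℝ}
    (h : ∀ w, RCLike.re (inner 𝕜 (T w) w) ≤ RCLike.re (inner 𝕜 (S w) w) + c * ‖w‖ ^ 2)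
    (i : Fin n) : hT.eigenvalues hn i ≤ hS.eigenvalues hn i + c := by
  -- A test vector in the span of the first `i + 1` eigenvectors of `T` that is orthogonal to the
  -- first `i` eigenvectors of `S`: these are `n - 1` linear conditions.
  let e : {j // j ≠ i} → E := fun j =>
    if i < j.1 then hT.eigenvectorBasis hn j else hS.eigenvectorBasis hn j
  obtain ⟨w, hw0, hw⟩ := exists_ne_zero_forall_inner_eq_zero (𝕜 := 𝕜) e
    (by simpa [hn, Fintype.card_subtype_compl] using Nat.sub_lt i.pos one_pos)
  have hlower : hT.eigenvalues hn i * ‖w‖ ^ 2 ≤ RCLike.re (inner 𝕜 (T w) w) :=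
    eigenvalues_mul_sq_norm_le_re_inner hT hn fun j hj => by
      simpa [e, hj] using hw ⟨j, hj.ne'⟩
  have hupper : RCLike.re (inner 𝕜 (S w) w) ≤ hS.eigenvalues hn i * ‖w‖ ^ 2 :=
    re_inner_le_eigenvalues_mul_sq_norm hS hn fun j hj => by
      simpa [e, not_lt_of_gt hj] using hw ⟨j, hj.ne⟩
  refine le_of_mul_le_mul_right ?_ (pow_pos (norm_pos_iff.2 hw0) 2)
  linarith [h w]

end Weyl

section MatrixEigenvalues

variable {n k : ℕ} {A B : Matrix (Fin n) (Fin n) ℝ}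

theorem isHermitian_eigenvalues_le_add (hA : A.IsHermitian) (hB : B.IsHermitian) {c : ℝ}
    (h : ∀ w : Euc n, ⟪A.toEuclideanLin w, w⟫ ≤ ⟪B.toEuclideanLin w, w⟫ + c * ‖w‖ ^ 2)
    (i : Fin n) : hA.eigenvalues i ≤ hB.eigenvalues i + c :=
  eigenvalues_le_eigenvalues_add (Matrix.isSymmetric_toEuclideanLin_iff.2 hA)
    (Matrix.isSymmetric_toEuclideanLin_iff.2 hB) finrank_euclideanSpace h _

theorem InGardingCone.of_inner_le (hA : InGardingCone k A) (hB : B.IsHermitian)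
    (h : ∀ w : Euc n, ⟪A.toEuclideanLin w, w⟫ ≤ ⟪B.toEuclideanLin w, w⟫) :
    InGardingCone k B := by
  obtain ⟨hAherm, -⟩ := id hA
  refine (inGardingCone_iff hB).2 (((inGardingCone_iff hAherm).1 hA).map_of_le fun i => ?_)
  simpa using isHermitian_eigenvalues_le_add hAherm hB (c := 0) (by simpa using h) i

theorem inner_toEuclideanLin_add_smul_one (A : Matrix (Fin n) (Fin n) ℝ) (η : ℝ) (w : Euc n) :
    ⟪(A + η • 1).toEuclideanLin w, w⟫ = ⟪A.toEuclideanLin w, w⟫ + η * ‖w‖ ^ 2 := by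
  simp [inner_add_left, inner_smul_left]

theorem isHermitian_add_smul_one (hA : A.IsHermitian) (η : ℝ) : (A + η • 1).IsHermitian :=
  hA.add (Matrix.isHermitian_one.smul (IsSelfAdjoint.all η))

theorem eigenvalues_add_smul_one (hA : A.IsHermitian) (η : ℝ) :
    (isHermitian_add_smul_one hA η).eigenvalues = fun i => hA.eigenvalues i + η := by
  funext i
  refine le_antisymm ?_ ?_
  · exact isHermitian_eigenvalues_le_add _ _ (fun w =>
      (inner_toEuclideanLin_add_smul_one A η w).le) i
  · have hle := isHermitian_eigenvalues_le_add hA (isHermitian_add_smul_one hA η) (c := -η)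
      (fun w => by rw [inner_toEuclideanLin_add_smul_one]; linarith) i
    linarith

theorem sigmaMat_nonneg_of_forall_add_smul_one (hA : A.IsHermitian)
    (h : ∀ η : ℝ, 0 < η → 0 ≤ sigmaMat k (A + η • 1)) : 0 ≤ sigmaMat k A := by
  have hcont : Continuous fun η : ℝ => esymmVec k fun i => hA.eigenvalues i + η := by
    unfold esymmVec
    fun_prop
  have hlim : Tendsto (fun η : ℝ => esymmVec k fun i => hA.eigenvalues i + η) (𝓝[>] 0)
      (𝓝 (sigmaMat k A)) := by
    simpa [sigmaMat_eq k hA] using (hcont.tendsto 0).mono_left nhdsWithin_le_nhds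
  refine ge_of_tendsto hlim ?_
  filter_upwards [self_mem_nhdsWithin] with η hη
  rw [← eigenvalues_add_smul_one hA η, ← sigmaMat_eq]
  exact h η hη

end MatrixEigenvalues

section SecondOrderTest

theorem deriv_deriv_nonpos_of_isLocalMax {f : ℝ → ℝ} {x : ℝ} (hf : ContinuousAt f x)
    (h : IsLocalMax f x) : deriv (deriv f) x ≤ 0 := by
  by_contra! hpos
  have hmin : IsLocalMin f x := isLocalMin_of_deriv_deriv_pos hpos h.deriv_eq_zero hf
  have hconst : f =ᶠ[𝓝 x] fun _ => f x := by
    filter_upwards [h, hmin] with y hle hge using le_antisymm hle hge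
  have hzero : deriv (deriv f) x = 0 := by
    simpa using hconst.deriv.deriv_eq
  exact hpos.ne' hzero

variable {E : Type*} [NormedAddCommGroup E] [NormedSpace ℝ E] {f : E → ℝ} {x : E}

theorem deriv_deriv_comp_line (hf : ContDiffAt ℝ 2 f x) (w : E) :
    deriv (deriv fun t : ℝ => f (x + t • w)) 0 = iteratedFDeriv ℝ 2 f x ![w, w] := by
  have hline (t : ℝ) : HasDerivAt (fun t : ℝ => x + t • w) w t := by
    simpa using ((hasDerivAt_id t).smul_const w).const_add x
  have htendsto : Tendsto (fun t : ℝ => x + t • w) (𝓝 0) (𝓝 x) := by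
    simpa using (hline 0).continuousAt.tendsto
  have hfirst : (deriv fun t : ℝ => f (x + t • w)) =ᶠ[𝓝 0]
      fun t => fderiv ℝ f (x + t • w) w := by
    filter_upwards [htendsto.eventually (hf.eventually (by simp))] with t ht
    exact ((ht.differentiableAt two_ne_zero).hasFDerivAt.comp_hasDerivAt t (hline t)).deriv
  have hsecond : HasFDerivAt (fderiv ℝ f) (fderiv ℝ (fderiv ℝ f) x) (x + (0 : ℝ) • w) := by
    simpa using ((hf.fderiv_right (m := 1) (by norm_num)).differentiableAt one_ne_zero).hasFDerivAt
  rw [hfirst.deriv_eq, iteratedFDeriv_two_apply]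
  have hfderiv : HasDerivAt (fun t : ℝ => fderiv ℝ f (x + t • w)) (fderiv ℝ (fderiv ℝ f) x w) 0 :=
    hsecond.comp_hasDerivAt 0 (hline 0)
  simpa using (hfderiv.clm_apply (hasDerivAt_const 0 w)).deriv

theorem iteratedFDeriv_two_nonpos_of_isLocalMax (hf : ContDiffAt ℝ 2 f x) (h : IsLocalMax f x)
    (w : E) : iteratedFDeriv ℝ 2 f x ![w, w] ≤ 0 := by
  have hline : ContinuousAt (fun t : ℝ => x + t • w) 0 := by fun_prop
  rw [← deriv_deriv_comp_line hf w]
  refine deriv_deriv_nonpos_of_isLocalMax (hf.continuousAt.comp_of_eq hline (by simp)) ?_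
  exact IsLocalMax.comp_continuous (g := fun t : ℝ => x + t • w) (by simpa using h) hline

end SecondOrderTest

section QuadraticPolynomials

variable {n : ℕ} (A : Matrix (Fin n) (Fin n) ℝ) (b : Euc n) (c : ℝ)

theorem quadPoly_eq (x : Euc n) : quadPoly A b c x = ⟪A.toEuclideanLin x, x⟫ / 2 + ⟪b, x⟫ + c := by
  simp only [quadPoly, PiLp.inner_apply, Matrix.toLpLin_apply, Matrix.mulVec, dotProduct,
    RCLike.inner_apply, conj_trivial, Finset.mul_sum]
  congr! 5 with i - j -
  ring

theorem contDiff_quadPoly : ContDiff ℝ 2 (quadPoly A b c) := by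
  unfold quadPoly
  have hinner : ContDiff ℝ 2 fun x : Euc n => ⟪b, x⟫ := contDiff_const.inner ℝ contDiff_id
  fun_prop

theorem quadPoly_add_smul (x w : Euc n) (t : ℝ) :
    quadPoly A b c (x + t • w) = quadPoly A b c x +
      t * ((⟪A.toEuclideanLin x, w⟫ + ⟪A.toEuclideanLin w, x⟫) / 2 + ⟪b, w⟫) +
      t ^ 2 * (⟪A.toEuclideanLin w, w⟫ / 2) := by
  simp only [quadPoly_eq, map_add, map_smul, inner_add_left, inner_add_right, inner_smul_left,
    inner_smul_right, conj_trivial]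
  ring

theorem iteratedFDeriv_two_quadPoly (x w : Euc n) :
    iteratedFDeriv ℝ 2 (quadPoly A b c) x ![w, w] = ⟪A.toEuclideanLin w, w⟫ := by
  rw [← deriv_deriv_comp_line (contDiff_quadPoly A b c).contDiffAt w]
  simp only [quadPoly_add_smul]
  set β := (⟪A.toEuclideanLin x, w⟫ + ⟪A.toEuclideanLin w, x⟫) / 2 + ⟪b, w⟫
  set γ := ⟪A.toEuclideanLin w, w⟫
  have hfirst : deriv (fun t : ℝ => quadPoly A b c x + t * β + t ^ 2 * (γ / 2)) =
      fun t => β + γ * t := by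
    funext t
    have hlin := ((hasDerivAt_id t).mul_const β).const_add (quadPoly A b c x)
    have hsq := (hasDerivAt_pow 2 t).mul_const (γ / 2)
    refine (hlin.fun_add hsq).deriv.trans ?_
    push_cast
    ring
  rw [hfirst]
  simp

theorem exists_quadPoly_add_smul_one (η : ℝ) (x₀ : Euc n) :
    ∃ b' c', ∀ x, quadPoly (A + η • 1) b' c' x = quadPoly A b c x + η / 2 * ‖x - x₀‖ ^ 2 := by
  refine ⟨b - η • x₀, c + η / 2 * ‖x₀‖ ^ 2, fun x => ?_⟩
  rw [quadPoly_eq, quadPoly_eq, inner_toEuclideanLin_add_smul_one, norm_sub_sq_real,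
    inner_sub_left, inner_smul_left, real_inner_comm x₀ x, conj_trivial]
  ring

end QuadraticPolynomials

section Hessian

variable {n : ℕ} {u : Euc n → ℝ} {x : Euc n}

theorem inner_toEuclideanLin_hessian (u : Euc n → ℝ) (x w : Euc n) :
    ⟪(hessian u x).toEuclideanLin w, w⟫ = iteratedFDeriv ℝ 2 u x ![w, w] := by
  have hw : w = ∑ i, w i • EuclideanSpace.single i (1 : ℝ) := by
    simpa using ((EuclideanSpace.basisFun (Fin n) ℝ).sum_repr w).symm
  simp only [PiLp.inner_apply, Matrix.toLpLin_apply, Matrix.mulVec, dotProduct,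
    RCLike.inner_apply, conj_trivial, hessian, iteratedFDeriv_two_apply]
  conv_rhs => rw [hw]
  simp only [map_sum, map_smul, _root_.sum_apply, _root_.smul_apply, smul_eq_mul, Finset.mul_sum,
    Matrix.cons_val_zero, Matrix.cons_val_one]
  rw [Finset.sum_comm]
  exact Finset.sum_congr rfl fun j _ => Finset.sum_congr rfl fun i _ => by ring

theorem hessianWithin_of_mem_nhds {s : Set (Euc n)} (u : Euc n → ℝ) (hs : s ∈ 𝓝 x) :
    hessianWithin u s x = hessian u x := by
  ext i j
  rw [hessianWithin, hessian, ← iteratedFDerivWithin_univ,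
    iteratedFDerivWithin_congr_set (eventuallyEq_univ.2 hs)]

theorem inner_hessian_le_of_isLocalMax_sub_quadPoly (hu : ContDiffAt ℝ 2 u x)
    {A : Matrix (Fin n) (Fin n) ℝ} {b : Euc n} {c : ℝ}
    (h : IsLocalMax (fun y => u y - quadPoly A b c y) x) (w : Euc n) :
    ⟪(hessian u x).toEuclideanLin w, w⟫ ≤ ⟪A.toEuclideanLin w, w⟫ := by
  have hq : ContDiffAt ℝ 2 (quadPoly A b c) x := (contDiff_quadPoly A b c).contDiffAt
  have hle := iteratedFDeriv_two_nonpos_of_isLocalMax (hu.sub hq) h w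
  change iteratedFDeriv ℝ 2 (u - quadPoly A b c) x ![w, w] ≤ 0 at hle
  rwa [iteratedFDeriv_sub_apply hu hq, sub_apply, iteratedFDeriv_two_quadPoly, sub_nonpos,
    ← inner_toEuclideanLin_hessian] at hle

end Hessian

section UpperEnvelope

theorem le_of_forall_mem_dense_le {X α : Type*} [TopologicalSpace X] [TopologicalSpace α]
    [Preorder α] [OrderClosedTopology α] {D B : Set X} (hD : Dense D) (hB : IsOpen B)
    {f : X → α} (hf : ContinuousOn f B) {a : α} (hle : ∀ x ∈ B ∩ D, f x ≤ a) {x : X}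
    (hx : x ∈ B) : f x ≤ a :=
  ((hf x hx).mono inter_subset_left).closure_le (hD.open_subset_closure_inter hB hx)
    continuousWithinAt_const hle

theorem exists_isLocalMax_sub_add_sq_dist {X ι : Type*} [PseudoMetricSpace X] [ProperSpace X]
    {Ω D : Set X} (hΩ : IsOpen Ω) (hD : Dense D) {U : ι → X → ℝ}
    (hU : ∀ m, ContinuousOn (U m) Ω) {v : X → ℝ} (hUv : ∀ m, ∀ x ∈ Ω ∩ D, U m x ≤ v x)
    {x₀ : X} (hx₀ : x₀ ∈ Ω) (hfreq : ∀ a < v x₀, ∃ᶠ y in 𝓝 x₀, ∃ m, a < U m y)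
    {q : X → ℝ} (hq : Continuous q) (hmax : IsLocalMax (fun y => v y - q y) x₀)
    {η : ℝ} (hη : 0 < η) :
    ∃ m, ∃ x ∈ Ω, IsLocalMax (fun y => U m y - (q y + η * dist y x₀ ^ 2)) x := by
  obtain ⟨ρ, hρ, hball⟩ := Metric.mem_nhds_iff.1 (inter_mem (hΩ.mem_nhds hx₀) hmax)
  have hbound (m : ι) {y : X} (hy : y ∈ ball x₀ ρ) : U m y - q y ≤ v x₀ - q x₀ := by
    refine le_of_forall_mem_dense_le hD isOpen_ball (f := fun y => U m y - q y)
      (((hU m).mono fun z hz => (hball hz).1).sub hq.continuousOn) (fun z hz => ?_) hy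
    exact (sub_le_sub_right (hUv m z ⟨(hball hz.1).1, hz.2⟩) _).trans (hball hz.1).2
  obtain ⟨r, hr, hrρ⟩ := exists_between hρ
  have hclosedBall : closedBall x₀ r ⊆ ball x₀ ρ := closedBall_subset_ball hrρ
  have hpenalty : Continuous fun y => q y + η * dist y x₀ ^ 2 := by fun_prop
  have hgap : 0 < η * r ^ 2 / 2 := by positivity
  have hnear : ∀ᶠ y in 𝓝 x₀, q y + η * dist y x₀ ^ 2 < q x₀ + η * r ^ 2 / 2 :=
    hpenalty.continuousAt.eventually_lt_const (by simpa using hgap)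
  obtain ⟨y, ⟨m, hUy⟩, hqy, hyr⟩ := ((hfreq _ (sub_lt_self _ hgap)).and_eventually
    (hnear.and (ball_mem_nhds x₀ hr))).exists
  have hsphere : ∀ z ∈ closedBall x₀ r \ ball x₀ r,
      U m z - (q z + η * dist z x₀ ^ 2) < U m y - (q y + η * dist y x₀ ^ 2) := by
    intro z hz
    have hdist : dist z x₀ = r := by
      simpa only [closedBall_sdiff_ball, mem_sphere] using hz
    have hUz := hbound m (hclosedBall hz.1)
    rw [hdist]
    linarith
  obtain ⟨x, hx, hxmax⟩ := (isCompact_closedBall x₀ r).exists_isLocalMax_mem_open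
    ball_subset_closedBall
    (((hU m).mono fun z hz => (hball (hclosedBall hz)).1).sub hpenalty.continuousOn)
    (ball_subset_closedBall hyr) hsphere isOpen_ball
  exact ⟨m, x, (hball (hclosedBall (ball_subset_closedBall hx))).1, hxmax⟩

end UpperEnvelope

section ViscosityConvexity

variable {n k : ℕ} {w : Euc n → ℝ} {x₀ : Euc n}

/-- `w` satisfies the test defining `k`-convexity in the viscosity sense at the point `x`: every
quadratic polynomial `q` for which `w - q` has a local maximum at `x` satisfies `σ_k(D²q) ≥ 0`. -/
def IsViscosityKConvexAt (k : ℕ) (w : Euc n → ℝ) (x : Euc n) : Prop :=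
  ∀ A : Matrix (Fin n) (Fin n) ℝ, A.IsHermitian → ∀ (b : Euc n) (c : ℝ),
    IsLocalMax (fun y => w y - quadPoly A b c y) x → 0 ≤ sigmaMat k A

theorem IsViscosityKConvexAt.of_inGardingCone_hessian (hw : ContDiffAt ℝ 2 w x₀)
    (hcone : InGardingCone k (hessian w x₀)) : IsViscosityKConvexAt k w x₀ := fun _ hA _ _ hmax =>
  (hcone.of_inner_le hA (inner_hessian_le_of_isLocalMax_sub_quadPoly hw hmax)).sigmaMat_pos.le

theorem IsViscosityKConvexAt.of_isLocalMin (h : IsLocalMin w x₀) : IsViscosityKConvexAt k w x₀ := by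
  intro A hA b c hmax
  have hmaxq : IsLocalMax (fun y => w x₀ - quadPoly A b c y) x₀ := by
    filter_upwards [h, hmax] with y hmin hle
    linarith
  have hzero : hessian (fun _ => w x₀) x₀ = 0 := by
    ext i j
    simp [hessian, iteratedFDeriv_two_apply]
  have hinner := inner_hessian_le_of_isLocalMax_sub_quadPoly contDiffAt_const hmaxq
  rw [hzero] at hinner
  refine sigmaMat_nonneg_of_posSemidef k (Matrix.isPositive_toEuclideanLin_iff.1 ?_)
  exact ⟨Matrix.isSymmetric_toEuclideanLin_iff.2 hA, fun y => by simpa using hinner y⟩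

theorem IsViscosityKConvexAt.congr {w' : Euc n → ℝ} (h : IsViscosityKConvexAt k w x₀)
    (heq : w =ᶠ[𝓝 x₀] w') : IsViscosityKConvexAt k w' x₀ := fun A hA b c hmax =>
  h A hA b c (hmax.congr (by filter_upwards [heq] with y hy using by rw [hy]))

theorem IsViscosityKConvexAt.of_frequently_lt {ι : Type*} {Ω D : Set (Euc n)} (hΩ : IsOpen Ω)
    (hD : Dense D) {U : ι → Euc n → ℝ} (hU : ∀ m, ContinuousOn (U m) Ω)
    (hconv : ∀ m, ∀ x ∈ Ω, IsViscosityKConvexAt k (U m) x) {v : Euc n → ℝ}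
    (hUv : ∀ m, ∀ x ∈ Ω ∩ D, U m x ≤ v x) (hx₀ : x₀ ∈ Ω)
    (hfreq : ∀ a < v x₀, ∃ᶠ y in 𝓝 x₀, ∃ m, a < U m y) : IsViscosityKConvexAt k v x₀ := by
  intro A hA b c hmax
  refine sigmaMat_nonneg_of_forall_add_smul_one hA fun η hη => ?_
  obtain ⟨m, x, hx, hxmax⟩ := exists_isLocalMax_sub_add_sq_dist hΩ hD hU hUv hx₀ hfreq
    (contDiff_quadPoly A b c).continuous hmax (half_pos hη)
  obtain ⟨b', c', hq⟩ := exists_quadPoly_add_smul_one A b c η x₀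
  exact hconv m x hx _ (isHermitian_add_smul_one hA η) b' c'
    (by simpa [hq, dist_eq_norm] using hxmax)

end ViscosityConvexity

section Extension

variable {n k : ℕ} {Ω : Set (Euc n)} {u : Euc n → ℝ} {p x : Euc n} {e M : ℝ}

theorem extendBy_of_mem (u : Euc n → ℝ) (M : ℝ) (hx : x ∈ closedBall p e) :
    extendBy u p e M x = -M :=
  if_pos hx

theorem extendBy_of_notMem (u : Euc n → ℝ) (M : ℝ) (hx : x ∉ closedBall p e) :
    extendBy u p e M x = u x :=
  if_neg hx

theorem neg_le_extendBy (hge : ∀ y ∈ Ω \ closedBall p e, -M ≤ u y) (hx : x ∈ Ω) :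
    -M ≤ extendBy u p e M x := by
  by_cases hmem : x ∈ closedBall p e
  · exact (extendBy_of_mem u M hmem).ge
  · exact (hge x ⟨hx, hmem⟩).trans (extendBy_of_notMem u M hmem).ge

theorem continuousOn_extendBy (hu : ContinuousOn u (ringSet Ω p e))
    (hsphere : ∀ y ∈ sphere p e, u y = -M) : ContinuousOn (extendBy u p e M) Ω := by
  have hring : ringSet Ω p e ⊆ (ball p e)ᶜ :=
    closure_minimal (fun y hy hmem => hy.2 (ball_subset_closedBall hmem)) isOpen_ball.isClosed_compl
  have houter : ContinuousOn (extendBy u p e M) (ringSet Ω p e) := by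
    refine hu.congr fun y hy => ?_
    by_cases hmem : y ∈ closedBall p e
    · rw [extendBy_of_mem u M hmem,
        hsphere y (closedBall_sdiff_ball (x := p) ▸ ⟨hmem, hring hy⟩)]
    · exact extendBy_of_notMem u M hmem
  have hinner : ContinuousOn (extendBy u p e M) (closedBall p e) :=
    continuousOn_const.congr fun y hy => extendBy_of_mem u M hy
  refine (houter.union_of_isClosed hinner isClosed_closure isClosed_closedBall).mono ?_
  rw [union_comm]
  exact sdiff_subset_iff.1 subset_closure

theorem isViscosityKConvexAt_extendBy (hΩ : IsOpen Ω) (hu : ContDiffOn ℝ 2 u (ringSet Ω p e))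
    (hcone : ∀ y ∈ Ω \ closedBall p e, InGardingCone k (hessianWithin u (ringSet Ω p e) y))
    (hge : ∀ y ∈ Ω \ closedBall p e, -M ≤ u y) (hx : x ∈ Ω) :
    IsViscosityKConvexAt k (extendBy u p e M) x := by
  by_cases hmem : x ∈ closedBall p e
  · refine IsViscosityKConvexAt.of_isLocalMin ?_
    filter_upwards [hΩ.mem_nhds hx] with y hy
    exact (extendBy_of_mem u M hmem).trans_le (neg_le_extendBy hge hy)
  · have hdiff : Ω \ closedBall p e ∈ 𝓝 x :=
      (hΩ.sdiff isClosed_closedBall).mem_nhds ⟨hx, hmem⟩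
    have hring : ringSet Ω p e ∈ 𝓝 x := mem_of_superset hdiff subset_closure
    refine (IsViscosityKConvexAt.of_inGardingCone_hessian (hu.contDiffAt hring) ?_).congr ?_
    · exact hessianWithin_of_mem_nhds u hring ▸ hcone x ⟨hx, hmem⟩
    · filter_upwards [hdiff] with y hy using (extendBy_of_notMem u M hy.2).symm

theorem neg_le_underSol (k : ℕ) (M : ℝ) (he : 0 ≤ e) (hx : x ∉ closedBall p e) :
    -M ≤ underSol k p e M x := by
  have hnorm : e ≤ ‖x - p‖ := by
    rw [← dist_eq_norm]
    exact (not_le.1 hx).le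
  have hcnk : 0 ≤ cnk n k := by
    unfold cnk
    positivity
  have hdiv : e ^ 2 / (2 * cnk n k) ≤ ‖x - p‖ ^ 2 / (2 * cnk n k) := by gcongr
  unfold underSol
  linarith

end Extension

theorem statement16_general {n k : ℕ} [NeZero n] {Ω : Set (Euc n)} (hΩ : IsOpen Ω) {p : Euc n}
    {M : ℝ} {ι : Type*} {ε : ι → ℝ} {u : ι → Euc n → ℝ}
    (hC2 : ∀ m, ContDiffOn ℝ 2 (u m) (ringSet Ω p (ε m)))
    (hcone : ∀ m, ∀ x ∈ Ω \ closedBall p (ε m),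
      InGardingCone k (hessianWithin (u m) (ringSet Ω p (ε m)) x))
    (hsphere : ∀ m, ∀ x ∈ sphere p (ε m), u m x = -M)
    (hge : ∀ m, ∀ x ∈ Ω \ closedBall p (ε m), -M ≤ u m x) {v : Euc n → ℝ}
    (hv : ∀ x ∈ Ω \ {p}, IsLUB (range fun m => extendBy (u m) p (ε m) M x) (v x))
    (hvp : v p = limsup v (𝓝[≠] p)) {x : Euc n} (hx : x ∈ Ω) : IsViscosityKConvexAt k v x := by
  have happrox {a : ℝ} {y : Euc n} (hy : y ∈ Ω \ {p}) (ha : a < v y) :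
      ∃ m, a < extendBy (u m) p (ε m) M y := by
    simpa using (lt_isLUB_iff (hv y hy)).1 ha
  refine IsViscosityKConvexAt.of_frequently_lt hΩ (dense_compl_singleton p)
    (fun m => continuousOn_extendBy (hC2 m).continuousOn (hsphere m))
    (fun m y hy => isViscosityKConvexAt_extendBy hΩ (hC2 m) (hcone m) (hge m) hy)
    (fun m y hy => (hv y hy).1 (mem_range_self m)) hx fun a ha => ?_
  rcases eq_or_ne x p with rfl | hxp
  · have hpunctured : ∀ᶠ y in 𝓝[≠] x, y ∈ Ω \ {x} :=
      sdiff_mem_nhdsWithin_compl (hΩ.mem_nhds hx) _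
    have hbelow : IsBoundedUnder (· ≥ ·) (𝓝[≠] x) v := by
      refine isBoundedUnder_of_eventually_ge (a := -M) (hpunctured.mono fun y hy => ?_)
      obtain ⟨_, m, rfl⟩ := (hv y hy).nonempty
      exact (neg_le_extendBy (hge m) hy.1).trans ((hv y hy).1 (mem_range_self m))
    have hfreq := frequently_lt_of_lt_limsup hbelow.isCoboundedUnder_le (hvp ▸ ha)
    exact ((hfreq.and_eventually hpunctured).mono fun y hy => happrox hy.2 hy.1).filter_mono
      nhdsWithin_le_nhds
  · exact frequently_iff.2 fun hs => ⟨x, mem_of_mem_nhds hs, happrox ⟨hx, hxp⟩ ha⟩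

/-- the limit `v` of the extended solutions is `k`-convex in the
viscosity sense in `Ω₁`. -/
theorem statement16 {n k : ℕ} (hk : 1 ≤ k) (hkn : k ≤ n)
    (Ω₁ : Set (Euc n)) (hΩo : IsOpen Ω₁) (hΩconv : Convex ℝ Ω₁)
    (hΩb : IsBounded Ω₁) (hΩs : HasSmoothBoundary Ω₁)
    (ε₀ : ℝ) (hε₀ : 0 < ε₀) (hball : closedBall (0 : Euc n) ε₀ ⊆ Ω₁)
    (ψ : Euc n → ℝ) (hψ : IsSol22 k Ω₁ ψ)
    (M₁ : ℝ) (hM₁ : 0 < M₁) (hM₁ψ : ∀ x ∈ closure Ω₁, -ψ x < M₁)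
    (hM₁sub : ∀ ε ∈ Ioo (0:ℝ) ε₀, ∀ x ∈ frontier Ω₁, underSol k (0 : Euc n) ε M₁ x ≤ 0)
    (M : ℝ) (hM : M₁ < M)
    (ε : ℕ → ℝ) (hεm : ∀ m, ε m ∈ Ioo (0:ℝ) ε₀) (hε0 : Tendsto ε atTop (𝓝 0))
    (u : ℕ → Euc n → ℝ) (hu : ∀ m, IsSol k Ω₁ (0 : Euc n) (ε m) M (u m))
    (hsub : ∀ m, ∀ x ∈ Ω₁ \ closedBall (0 : Euc n) (ε m),
      underSol k (0 : Euc n) (ε m) M x ≤ u m x)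
    (hmono : ∀ m, ∀ x ∈ Ω₁,
      extendBy (u m) (0 : Euc n) (ε m) M x ≤ extendBy (u (m+1)) (0 : Euc n) (ε (m+1)) M x)
    (v : Euc n → ℝ)
    (hC0 : ∀ K : Set (Euc n), K ⊆ Ω₁ \ {(0 : Euc n)} → IsCompact K →
      TendstoUniformlyOn (fun m => extendBy (u m) (0 : Euc n) (ε m) M) v atTop K)
    (hC1 : ∀ K : Set (Euc n), K ⊆ Ω₁ \ {(0 : Euc n)} → IsCompact K →
      TendstoUniformlyOn (fun m x => fderiv ℝ (extendBy (u m) (0 : Euc n) (ε m) M) x)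
        (fun x => fderiv ℝ v x) atTop K)
    (hv0 : v 0 = Filter.limsup v (𝓝[≠] (0 : Euc n))) :
    ∀ A : Matrix (Fin n) (Fin n) ℝ, A.IsHermitian → ∀ (b : Euc n) (c : ℝ),
      (∃ x₀ ∈ Ω₁, IsLocalMax (fun x => v x - quadPoly A b c x) x₀) →
      0 ≤ sigmaMat k A := by
  have : NeZero n := ⟨by omega⟩
  intro A hA b c ⟨x₀, hx₀, hmax⟩
  have hge (m : ℕ) : ∀ x ∈ Ω₁ \ closedBall (0 : Euc n) (ε m), -M ≤ u m x := fun x hx =>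
    (neg_le_underSol k M (hεm m).1.le hx.2).trans (hsub m x hx)
  have hlub : ∀ x ∈ Ω₁ \ {(0 : Euc n)},
      IsLUB (range fun m => extendBy (u m) (0 : Euc n) (ε m) M x) (v x) := fun x hx =>
    isLUB_of_tendsto_atTop (monotone_nat_of_le_succ fun m => hmono m x hx.1)
      ((hC0 {x} (singleton_subset_iff.2 hx) isCompact_singleton).tendsto_at rfl)
  exact statement16_general hΩo (fun m => (hu m).1) (fun m x hx => ((hu m).2.1 x hx).1)
    (fun m => (hu m).2.2.2) hge hlub hv0 hx₀ A hA b c hmax
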